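/- Let n be a nonzero integer, r₀ > 0, r > r₀, and θ ∈ ℝ. Then the radial derivative of the single-layer potential of the density e^{inφ} on the circle of radius r₀ at the exterior point re^{iθ} satisfies ∫₀^{2π} (r₀/(2π)) · (r − r₀ cos(θ − φ))/(r² + r₀² − 2rr₀ cos(θ − φ)) · e^{inφ} dφ = (1/2) · (r₀/r)^{|n|+1} · e^{inθ}. -/

import Mathlib

/-!
The radial derivative of `log ‖w - z‖` in `w` is `Re (w / (w - z)) / ‖w‖`. For `z` on the circle of
radius `R` and `w` outside it, `Re (w / (w - z))` is half of one plus the Poisson kernel of the disk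
at the inverse point `R² / conj w`. By the mean value property and Poisson's formula, averaging a
holomorphic `f` against it over the circle therefore gives `(f 0 + f (R² / conj w)) / 2`. The
densities `e^{inφ}` with `n > 0` are boundary values of `(z / R) ^ n`, which vanishes at `0`; those
with `n < 0` are their conjugates.
-/

open Complex EuclideanGeometry Metric Real

section PoissonKernel

variable {c w z : ℂ} {R : ℝ}

theorem poissonKernel_inversion (hR : R ≠ 0) (hw : w ≠ c) (hz : z ∈ sphere c R) :
    poissonKernel c (inversion c R w) z = -poissonKernel c w z := by
  have hzc : dist z c = R := hz
  have hz_ne : z ≠ c := dist_ne_zero.mp (hzc ▸ hR)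
  have hw_dist : dist w c ≠ 0 := dist_ne_zero.mpr hw
  have dist_inversion : dist z (inversion c R w) = R / dist w c * dist z w := by
    nth_rw 1 [← inversion_of_mem_sphere hz]
    rw [dist_inversion_inversion hz_ne hw, hzc]
    field_simp
  simp only [poissonKernel_def, sub_sub_sub_cancel_right, ← dist_eq_norm, dist_inversion,
    dist_inversion_center, hzc]
  field_simp
  ring

theorem re_sub_div_sub_eq_poissonKernel (hzw : z ≠ w) :
    ((w - c) / (w - z)).re = (1 - poissonKernel c w z) / 2 := by
  have hzw' : z - w ≠ 0 := sub_ne_zero.mpr hzw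
  have hwz : w - z ≠ 0 := sub_ne_zero.mpr hzw.symm
  have herglotz : (w - c) / (w - z) = ((1 / 2 : ℝ) : ℂ) * (1 - herglotzRieszKernel c w z) := by
    rw [herglotzRieszKernel_def, sub_sub_sub_cancel_right]
    push_cast
    field_simp
    ring
  rw [herglotz, re_ofReal_mul, poissonKernel_eq_re_herglotzRieszKernel, Function.comp_apply, sub_re,
    one_re]
  ring

theorem continuousOn_poissonKernel_sphere (hw : w ∈ ball c R) :
    ContinuousOn (poissonKernel c w) (sphere c |R|) := by
  rw [poissonKernel_eq_re_herglotzRieszKernel]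
  exact continuous_re.comp_continuousOn (continuousOn_herglotzRieszKernel_sphere hw)

theorem inversion_mem_ball (hR : 0 < R) (hw : R < dist w c) : inversion c R w ∈ ball c R := by
  rw [mem_ball, dist_inversion_center, div_lt_iff₀ (hR.trans hw), sq]
  gcongr

end PoissonKernel

section ExteriorPoint

theorem circleAverage_re_sub_div_sub_smul {E : Type*} [NormedAddCommGroup E] [NormedSpace ℂ E]
    [CompleteSpace E] {f : ℂ → E} {c w : ℂ} {R : ℝ} (hR : 0 < R)
    (hf : DiffContOnCl ℂ f (ball c R)) (hw : R < dist w c) :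
    circleAverage (fun z ↦ ((w - c) / (w - z)).re • f z) c R =
      (1 / 2 : ℝ) • (f c + f (inversion c R w)) := by
  have hw_inv : inversion c R w ∈ ball c R := inversion_mem_ball hR hw
  have hf_sphere : ContinuousOn f (sphere c |R|) := by
    rw [abs_of_pos hR]
    exact hf.continuousOn_ball.mono sphere_subset_closedBall
  have kernel_eq : Set.EqOn (fun z ↦ ((w - c) / (w - z)).re • f z)
      ((1 / 2 : ℝ) • (f + poissonKernel c (inversion c R w) • f)) (sphere c |R|) := by
    intro z hz
    rw [abs_of_pos hR] at hz
    have hzw : z ≠ w := by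
      rintro rfl
      exact hw.ne' hz
    have hwc : w ≠ c := dist_pos.mp (hR.trans hw)
    simp only [Pi.smul_apply, Pi.add_apply, Pi.smul_apply', poissonKernel_inversion hR.ne' hwc hz,
      re_sub_div_sub_eq_poissonKernel hzw]
    module
  have mean_value : circleAverage f c R = f c :=
    DiffContOnCl.circleAverage ((abs_of_pos hR).symm ▸ hf)
  rw [circleAverage_congr_sphere kernel_eq, circleAverage_smul,
    circleAverage_add hf_sphere.circleIntegrable'
      ((continuousOn_poissonKernel_sphere hw_inv).smul hf_sphere).circleIntegrable',
    mean_value, hf.circleAverage_poissonKernel_smul hw_inv]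

theorem re_circleMap_div_sub (r r₀ θ φ : ℝ) :
    (circleMap 0 r θ / (circleMap 0 r θ - circleMap 0 r₀ φ)).re =
      r * ((r - r₀ * Real.cos (θ - φ)) / (r ^ 2 + r₀ ^ 2 - 2 * r * r₀ * Real.cos (θ - φ))) := by
  have normSq_eq : normSq (circleMap 0 r θ - circleMap 0 r₀ φ) =
      r ^ 2 + r₀ ^ 2 - 2 * r * r₀ * Real.cos (θ - φ) := by
    simp only [normSq_apply, sub_re, sub_im, circleMap_zero_re, circleMap_zero_im, Real.cos_sub]
    linear_combination r ^ 2 * Real.sin_sq_add_cos_sq θ + r₀ ^ 2 * Real.sin_sq_add_cos_sq φ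
  rw [div_re, normSq_eq, ← add_div, mul_div_assoc']
  congr 1
  simp only [sub_re, sub_im, circleMap_zero_re, circleMap_zero_im, Real.cos_sub]
  linear_combination r ^ 2 * Real.sin_sq_add_cos_sq θ

theorem inversion_circleMap (c : ℂ) (R r θ : ℝ) :
    inversion c R (circleMap c r θ) = circleMap c (R ^ 2 / r) θ := by
  rcases eq_or_ne r 0 with rfl | hr
  · simp
  have hr' : (r : ℂ) ≠ 0 := ofReal_ne_zero.mpr hr
  rw [inversion, dist_eq_norm, vsub_eq_sub, circleMap_sub_center, norm_circleMap_zero, div_pow,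
    sq_abs, vadd_eq_add, real_smul, circleMap_zero, circleMap, add_comm c]
  push_cast
  field_simp

variable {r₀ r : ℝ}

theorem integral_re_circleMap_div_sub_mul_exp_nat {n : ℕ} (hn : n ≠ 0) (θ : ℝ) (hr₀ : 0 < r₀)
    (hrr₀ : r₀ < r) :
    ∫ φ in (0 : ℝ)..2 * π, ((circleMap 0 r θ / (circleMap 0 r θ - circleMap 0 r₀ φ)).re : ℂ) *
        cexp (I * n * φ) =
      π * ((r₀ / r : ℝ) : ℂ) ^ n * cexp (I * n * θ) := by
  have hr₀' : (r₀ : ℂ) ≠ 0 := ofReal_ne_zero.mpr hr₀.ne'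
  have hw : r₀ < dist (circleMap 0 r θ) 0 := by simpa using hrr₀.trans_le (le_abs_self r)
  have hf : DiffContOnCl ℂ (fun z : ℂ ↦ (z / r₀) ^ n) (ball 0 r₀) :=
    Differentiable.diffContOnCl (by fun_prop)
  have density_eq (s t : ℝ) : (circleMap 0 s t / r₀) ^ n = (s / r₀) ^ n * cexp (I * n * t) := by
    rw [circleMap_zero, mul_div_right_comm, mul_pow, ← Complex.exp_nat_mul]
    ring_nf
  have average := circleAverage_re_sub_div_sub_smul hr₀ hf hw
  rw [circleAverage_def, inv_smul_eq_iff₀ two_pi_pos.ne'] at average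
  simp only [sub_zero, inversion_circleMap, density_eq, zero_div, zero_pow hn, zero_add,
    div_self hr₀', one_pow, one_mul, real_smul] at average
  rw [average]
  push_cast
  field_simp

theorem integral_re_circleMap_div_sub_mul_exp_int {n : ℤ} (hn : n ≠ 0) (θ : ℝ) (hr₀ : 0 < r₀)
    (hrr₀ : r₀ < r) :
    ∫ φ in (0 : ℝ)..2 * π, ((circleMap 0 r θ / (circleMap 0 r θ - circleMap 0 r₀ φ)).re : ℂ) *
        cexp (I * n * φ) =
      π * ((r₀ / r : ℝ) : ℂ) ^ n.natAbs * cexp (I * n * θ) := by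
  obtain ⟨m, rfl | rfl⟩ := n.eq_nat_or_neg
  · simpa using integral_re_circleMap_div_sub_mul_exp_nat (by simpa using hn) θ hr₀ hrr₀
  · have conj_case := congrArg (starRingEnd ℂ)
      (integral_re_circleMap_div_sub_mul_exp_nat (n := m) (by simpa using hn) θ hr₀ hrr₀)
    rw [← intervalIntegral.intervalIntegral_conj] at conj_case
    simp only [map_mul, map_pow, conj_ofReal, ← Complex.exp_conj, conj_I, map_natCast] at conj_case
    simpa using conj_case

end ExteriorPoint

/-- Radial derivative of the single-layer potential of the density `e^{inφ}` on the
circle of radius `r₀` at an exterior point `re^{iθ}` (with `r > r₀ > 0`):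
`∫₀^{2π} (r₀/2π) (r - r₀cos(θ-φ))/(r² + r₀² - 2rr₀cos(θ-φ)) e^{inφ} dφ
  = (1/2) (r₀/r)^{|n|+1} e^{inθ}`. -/
theorem stmt_8 (n : ℤ) (hn : n ≠ 0) (r₀ r θ : ℝ) (hr₀ : 0 < r₀) (hrr₀ : r₀ < r) :
    (∫ φ in (0:ℝ)..(2 * Real.pi),
        ((r₀ / (2 * Real.pi) *
            ((r - r₀ * Real.cos (θ - φ)) /
              (r ^ 2 + r₀ ^ 2 - 2 * r * r₀ * Real.cos (θ - φ))) : ℝ) : ℂ) *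
          Complex.exp (Complex.I * n * φ)) =
      (1 / 2 : ℂ) * (((r₀ / r : ℝ) : ℂ)) ^ (n.natAbs + 1) *
        Complex.exp (Complex.I * n * θ) := by
  have hr : r ≠ 0 := (hr₀.trans hrr₀).ne'
  have kernel_eq (φ : ℝ) :
      r₀ / (2 * π) * ((r - r₀ * Real.cos (θ - φ)) /
          (r ^ 2 + r₀ ^ 2 - 2 * r * r₀ * Real.cos (θ - φ))) =
        r₀ / (2 * π * r) * (circleMap 0 r θ / (circleMap 0 r θ - circleMap 0 r₀ φ)).re := by
    rw [re_circleMap_div_sub]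
    field_simp
  simp_rw [kernel_eq, ofReal_mul, mul_assoc]
  rw [intervalIntegral.integral_const_mul]
  simp_rw [← mul_assoc]
  rw [integral_re_circleMap_div_sub_mul_exp_int hn θ hr₀ hrr₀, pow_succ]
  push_cast
  field_simp
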